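/- arXiv:2407.05280 — 3 statements merged into one kernel-verified Lean document; each statement's English description precedes it below -/
import Mathlib

section
/- Let p ≥ 1 and l be natural numbers with 0 < l < 2^p, and let s : ℕ → ℕ be a sequence with s(0) = 2^p + l such that s(i+1) ≤ ⌈s(i)/2⌉ + 1 for every i. Then s(p) ≤ 4. -/
/-!
The step `x ↦ x ⌈/⌉ b + c` is monotone, and if it does not increase `e`, it sends `b • m + e` to at
most `m + e`. A sequence starting at most `b ^ n • m + e` is therefore at most `m + e` after `n`
steps. For `b = 2` and `c = 1` the step fixes `e = 2`, and `2 ^ p + l ≤ 2 ^ p • 2 + 2`.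
-/

section CeilDiv

variable {α β : Type*} [Semiring α] [PartialOrder α] [AddCommMonoid β] [PartialOrder β]
  [IsOrderedAddMonoid β] [Module α β] [CeilDiv α β] {b : α} {c e m : β}

theorem smul_add_ceilDiv_le (hb : 0 < b) : (b • m + e) ⌈/⌉ b ≤ m + e ⌈/⌉ b := by
  rw [ceilDiv_le_iff_le_smul hb, smul_add]
  exact add_le_add_right (le_smul_ceilDiv hb) _

theorem stmt6_general {s : ℕ → β} {n : ℕ} (hb : 0 < b) (he : e ⌈/⌉ b + c ≤ e)
    (h0 : s 0 ≤ b ^ n • m + e) (hstep : ∀ i < n, s (i + 1) ≤ s i ⌈/⌉ b + c) :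
    s n ≤ m + e := by
  induction n generalizing m with
  | zero => simpa using h0
  | succ n ih =>
    have hn : s n ≤ b • m + e :=
      ih (by rwa [smul_smul, ← pow_succ]) fun i hi ↦ hstep i (Nat.lt_succ_of_lt hi)
    calc
      s (n + 1) ≤ s n ⌈/⌉ b + c := hstep n n.lt_succ_self
      _ ≤ (b • m + e) ⌈/⌉ b + c := add_le_add_left ((gc_smul_ceilDiv hb).monotone_l hn) c
      _ ≤ m + e ⌈/⌉ b + c := add_le_add_left (smul_add_ceilDiv_le hb) c
      _ = m + (e ⌈/⌉ b + c) := add_assoc ..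
      _ ≤ m + e := add_le_add_right he m

end CeilDiv

/-- If `p ≥ 1`, `0 < l < 2^p`, `s 0 = 2^p + l`, and `s (i+1) ≤ ⌈s i / 2⌉ + 1` for every `i`,
then `s p ≤ 4`. -/
theorem stmt6 (p l : ℕ) (hp : 1 ≤ p) (hl0 : 0 < l) (hl : l < 2 ^ p)
    (s : ℕ → ℕ) (h0 : s 0 = 2 ^ p + l)
    (hstep : ∀ i, s (i + 1) ≤ s i ⌈/⌉ 2 + 1) :
    s p ≤ 4 := by
  have hstart : s 0 ≤ 2 ^ p • 2 + 2 := by rw [smul_eq_mul]; lia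
  exact stmt6_general two_pos (by decide) hstart fun i _ ↦ hstep i
end

section
/- Let s : ℕ → ℕ be a sequence and t a natural number such that for every i < t, s(i+1) = ⌈s(i)/2⌉ or s(i+1) = s(i) − ⌈s(i)/2⌉ + 1, and such that s(i) ≥ 3 for every i ≤ t. Then t ≤ ⌈log₂ s(0)⌉. -/
/-!
Both replacements of a region of size `n` have size at most `n / 2 + 1`, and `2` is the fixed point
of `x ↦ x / 2 + 1`. So the excess `n - 2` at least halves in each step; it is still positive after
`t` steps, which forces `2 ^ t ≤ s 0 - 2`.
-/

theorem pow_mul_le_of_forall_mul_succ_le {R : Type*} [MonoidWithZero R] [Preorder R]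
    [PosMulMono R] {b : R} (hb : 0 ≤ b) {u : ℕ → R} {n : ℕ}
    (h : ∀ i < n, b * u (i + 1) ≤ u i) : b ^ n * u n ≤ u 0 := by
  induction n generalizing u with
  | zero => simp only [pow_zero, one_mul, le_refl]
  | succ n ih =>
    have tail_le : b ^ n * u (n + 1) ≤ u 1 :=
      ih (u := fun i ↦ u (i + 1)) fun i hi ↦ h (i + 1) (Nat.succ_lt_succ hi)
    calc b ^ (n + 1) * u (n + 1) = b * (b ^ n * u (n + 1)) := by rw [pow_succ', mul_assoc]
      _ ≤ b * u 1 := mul_le_mul_of_nonneg_left tail_le hb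
      _ ≤ u 0 := h 0 n.succ_pos

theorem le_log_of_forall_mul_succ_le {b : ℕ} (hb : 1 < b) {u : ℕ → ℕ} {n : ℕ}
    (h : ∀ i < n, b * u (i + 1) ≤ u i) (hn : 0 < u n) : n ≤ Nat.log b (u 0) := by
  refine Nat.le_log_of_pow_le hb ?_
  calc b ^ n ≤ b ^ n * u n := Nat.le_mul_of_pos_right _ hn
    _ ≤ u 0 := pow_mul_le_of_forall_mul_succ_le b.zero_le h

theorem mul_ceilDiv_le_add_pred (a b : ℕ) : b * (a ⌈/⌉ b) ≤ a + b - 1 :=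
  Nat.mul_div_le _ _

theorem two_mul_sub_two_le_of_eq_ceilDiv_or {m n : ℕ}
    (h : m = n ⌈/⌉ 2 ∨ m = n - n ⌈/⌉ 2 + 1) : 2 * (m - 2) ≤ n - 2 := by
  have ceil_le : 2 * (n ⌈/⌉ 2) ≤ n + 1 := mul_ceilDiv_le_add_pred n 2
  have le_ceil : n ≤ 2 * (n ⌈/⌉ 2) := (ceilDiv_le_iff_le_mul two_pos).1 le_rfl
  rcases h with rfl | rfl <;> omega

/-- If for every `i < t`, `s (i+1) = ⌈s i / 2⌉` or `s (i+1) = s i - ⌈s i / 2⌉ + 1`, and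
`s i ≥ 3` for every `i ≤ t`, then `t ≤ ⌈log₂ (s 0)⌉`. -/
theorem stmt7 (s : ℕ → ℕ) (t : ℕ)
    (hstep : ∀ i < t, s (i + 1) = s i ⌈/⌉ 2 ∨ s (i + 1) = s i - s i ⌈/⌉ 2 + 1)
    (hge : ∀ i ≤ t, 3 ≤ s i) :
    t ≤ Nat.clog 2 (s 0) := by
  have excess_halves : ∀ i < t, 2 * (s (i + 1) - 2) ≤ s i - 2 := fun i hi ↦
    two_mul_sub_two_le_of_eq_ceilDiv_or (hstep i hi)
  have excess_pos : 0 < s t - 2 := Nat.sub_pos_of_lt (hge t le_rfl)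
  calc t ≤ Nat.log 2 (s 0 - 2) :=
        le_log_of_forall_mul_succ_le (u := fun i ↦ s i - 2) one_lt_two excess_halves excess_pos
    _ ≤ Nat.log 2 (s 0) := Nat.log_mono_right (Nat.sub_le _ _)
    _ ≤ Nat.clog 2 (s 0) := Nat.log_le_clog 2 (s 0)
end

section
/- Let s : ℕ → ℕ be a sequence and t a natural number such that for every i < t, s(i+1) = ⌈s(i)/2⌉ or s(i+1) = s(i) − ⌈s(i)/2⌉ + 1, such that s(i) ≥ 3 for every i < t, and such that s(t) = 2. Then t ≤ ⌈log₂ s(0)⌉ + 1. -/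
/-!
Both choices for `s (i + 1)` are at most `s i / 2 + 1`, and `m ↦ m / 2 + 1` fixes `2`. The excess
`s i - 2` is therefore at least halved at every step, and since it is still positive at `i = t - 1`,
it can have been halved at most `log₂ (s 0 - 2)` times by then.
-/

theorem ceilDiv_le_div_add_one (m b : ℕ) : m ⌈/⌉ b ≤ m / b + 1 := by
  obtain rfl | hb := b.eq_zero_or_pos
  · rw [ceilDiv_zero]
    exact Nat.zero_le _
  · exact (ceilDiv_le_iff_le_mul hb).2 (Nat.lt_mul_div_succ m hb).le

theorem sub_ceilDiv_two (m : ℕ) : m - m ⌈/⌉ 2 = m / 2 := by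
  rw [Nat.ceilDiv_eq_add_pred_div]
  omega

theorem le_div_two_add_one_of_eq_ceilDiv_or_eq_sub {m m' : ℕ}
    (h : m' = m ⌈/⌉ 2 ∨ m' = m - m ⌈/⌉ 2 + 1) : m' ≤ m / 2 + 1 := by
  obtain rfl | rfl := h
  · exact ceilDiv_le_div_add_one m 2
  · rw [sub_ceilDiv_two]

theorem le_div_pow_of_succ_le_div {u : ℕ → ℕ} {b n : ℕ} (h : ∀ i < n, u (i + 1) ≤ u i / b) :
    u n ≤ u 0 / b ^ n := by
  have hmono : Monotone fun m : ℕ ↦ m / b := fun _ _ hle ↦ Nat.div_le_div_right hle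
  refine hmono.seq_le_seq (y := fun i ↦ u 0 / b ^ i) n (by simp) h fun i _ ↦ ?_
  rw [Nat.div_div_eq_div_mul, pow_succ]

theorem stmt8_general (s : ℕ → ℕ) (t : ℕ) (hstep : ∀ i < t, s (i + 1) ≤ s i / 2 + 1)
    (hge : ∀ i < t, 3 ≤ s i) : t ≤ Nat.log 2 (s 0 - 2) + 1 := by
  obtain _ | n := t
  · exact Nat.zero_le _
  have excess_halves : ∀ i < n, s (i + 1) - 2 ≤ (s i - 2) / 2 := fun i hi ↦ by
    have := hstep i (hi.trans n.lt_succ_self)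
    omega
  have excess_pos : 0 < s n - 2 := Nat.sub_pos_of_lt (hge n n.lt_succ_self)
  have quotient_pos : 0 < (s 0 - 2) / 2 ^ n :=
    excess_pos.trans_le (le_div_pow_of_succ_le_div (u := fun i ↦ s i - 2) excess_halves)
  have pow_le_excess : 2 ^ n ≤ s 0 - 2 := (Nat.div_pos_iff.1 quotient_pos).2
  exact Nat.succ_le_succ (Nat.le_log_of_pow_le one_lt_two pow_le_excess)

/-- If for every `i < t`, `s (i+1) = ⌈s i / 2⌉` or `s (i+1) = s i - ⌈s i / 2⌉ + 1`,
`s i ≥ 3` for every `i < t`, and `s t = 2`, then `t ≤ ⌈log₂ (s 0)⌉ + 1`. -/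
theorem stmt8 (s : ℕ → ℕ) (t : ℕ)
    (hstep : ∀ i < t, s (i + 1) = s i ⌈/⌉ 2 ∨ s (i + 1) = s i - s i ⌈/⌉ 2 + 1)
    (hge : ∀ i < t, 3 ≤ s i) (ht : s t = 2) :
    t ≤ Nat.clog 2 (s 0) + 1 :=
  (stmt8_general s t (fun i hi ↦ le_div_two_add_one_of_eq_ceilDiv_or_eq_sub (hstep i hi)) hge).trans
    (Nat.succ_le_succ ((Nat.log_le_clog 2 _).trans (Nat.clog_mono_right 2 (Nat.sub_le _ _))))
end
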